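/- Let A be an integrally closed residuated lattice and write ~a := a\e (= e/a). Then the map α(a) = ~~a preserves the residuals: ~~(a\b) = (~~a)\(~~b) and ~~(b/a) = (~~b)/(~~a) for all a, b ∈ A. -/

import Mathlib

/-- A residuated lattice: a lattice-ordered monoid with left and right residuals,
i.e. `b ≤ a\c ↔ a*b ≤ c ↔ a ≤ c/b`.  `ldiv a c` denotes `a\c` and `rdiv c b` denotes `c/b`. -/
class ResiduatedLattice (α : Type*) extends Lattice α, Monoid α where
  ldiv : α → α → α
  rdiv : α → α → α
  le_ldiv_iff : ∀ a b c : α, b ≤ ldiv a c ↔ a * b ≤ c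
  le_rdiv_iff : ∀ a b c : α, a ≤ rdiv c b ↔ a * b ≤ c

open ResiduatedLattice

/-!
In an integrally closed `A` the product `b * ~b` is dense: `a * (b * ~b) ≤ e` forces `a ≤ e`, and
likewise for `~b * b`. Hence `~~` makes `~a` an inverse of `a`: since `~a * b ≤ a\b`, while
`~a * a * (a\b) ≤ ~a * b` with `~a * a` dense, we get `~~(a\b) = ~~(~a * b)`. The right-hand side
only depends on `~~a` and `~~b`, so `~~(a\b) = ~~(~~a\~~b)`, and `~~a\~~b = ~(~b * ~~a)` is
already a fixed point of `~~`.
-/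

/-- A residuated partially ordered monoid: a residuated lattice without the lattice operations.
As for `ResiduatedLattice`, `ldiv a c` denotes `a\c` and `rdiv c b` denotes `c/b`; monotonicity of
the multiplication is not a field, because residuation forces it. -/
class ResiduatedPomonoid (α : Type*) extends PartialOrder α, Monoid α where
  ldiv : α → α → α
  rdiv : α → α → α
  le_ldiv_iff : ∀ a b c : α, b ≤ ldiv a c ↔ a * b ≤ c
  le_rdiv_iff : ∀ a b c : α, a ≤ rdiv c b ↔ a * b ≤ c

/-- The residuated partially ordered monoid underlying a residuated lattice. It is not an instance,
so that the order and the monoid of a residuated lattice are only found by their direct paths. -/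
abbrev ResiduatedLattice.toResiduatedPomonoid {α : Type*} [ResiduatedLattice α] :
    ResiduatedPomonoid α where
  ldiv := ldiv
  rdiv := rdiv
  le_ldiv_iff := le_ldiv_iff
  le_rdiv_iff := le_rdiv_iff

namespace ResiduatedPomonoid

scoped infix:75 " ⟍ " => ldiv
scoped infix:75 " ⟋ " => rdiv

section Residuation

variable {α : Type*} [ResiduatedPomonoid α]

theorem mul_ldiv_le (a b : α) : a * (a ⟍ b) ≤ b :=
  (le_ldiv_iff _ _ _).1 le_rfl

theorem rdiv_mul_le (b a : α) : (b ⟋ a) * a ≤ b :=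
  (le_rdiv_iff _ _ _).1 le_rfl

instance : MulLeftMono α where
  elim a b c h := (le_ldiv_iff a b (a * c)).1 (h.trans ((le_ldiv_iff _ _ _).2 le_rfl))

instance : MulRightMono α where
  elim a b c h := (le_rdiv_iff b a (c * a)).1 (h.trans ((le_rdiv_iff _ _ _).2 le_rfl))

/-- The negation `~a := a\e`, which by `le_neg_iff_mul_le_one'` is also `e/a` in the integrally
closed case. -/
def neg (a : α) : α := a ⟍ 1

scoped prefix:max "∼" => neg

theorem le_neg_iff_mul_le_one {a b : α} : b ≤ ∼a ↔ a * b ≤ 1 :=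
  le_ldiv_iff a b 1

theorem mul_neg_le_one (a : α) : a * ∼a ≤ 1 :=
  mul_ldiv_le a 1

theorem neg_mul_le_ldiv (a b : α) : ∼a * b ≤ a ⟍ b := by
  rw [le_ldiv_iff, ← mul_assoc]
  exact mul_le_of_le_one_left' (mul_neg_le_one a)

theorem ldiv_neg_eq_neg_mul (a b : α) : a ⟍ ∼b = ∼(b * a) :=
  eq_of_forall_le_iff fun x ↦ by
    rw [le_ldiv_iff, le_neg_iff_mul_le_one, le_neg_iff_mul_le_one, mul_assoc]

end Residuation

/-- Integral closedness of a residuated partially ordered monoid, encoded by the left law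
`a\a = e`; the right law `a/a = e` is the theorem `ResiduatedPomonoid.rdiv_self`. -/
class IntegrallyClosed (α : Type*) [ResiduatedPomonoid α] : Prop where
  ldiv_self : ∀ a : α, a ⟍ a = 1

section IntegrallyClosed

variable {α : Type*} [ResiduatedPomonoid α] [IntegrallyClosed α]

theorem le_one_of_mul_le_self {a b : α} (h : a * b ≤ a) : b ≤ 1 := by
  rwa [← IntegrallyClosed.ldiv_self a, le_ldiv_iff]

theorem mul_le_one_of_mul_le_one_swap {a b : α} (h : a * b ≤ 1) : b * a ≤ 1 :=
  le_one_of_mul_le_self (a := a) <| by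
    rw [← mul_assoc]
    exact mul_le_of_le_one_left' h

theorem mul_le_one_comm {a b : α} : a * b ≤ 1 ↔ b * a ≤ 1 :=
  ⟨mul_le_one_of_mul_le_one_swap, mul_le_one_of_mul_le_one_swap⟩

theorem le_neg_iff_mul_le_one' {a b : α} : b ≤ ∼a ↔ b * a ≤ 1 :=
  le_neg_iff_mul_le_one.trans mul_le_one_comm

theorem neg_mul_le_one (a : α) : ∼a * a ≤ 1 :=
  le_neg_iff_mul_le_one'.1 le_rfl

theorem mul_neg_le_rdiv (b a : α) : b * ∼a ≤ b ⟋ a := by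
  rw [le_rdiv_iff, mul_assoc]
  exact mul_le_of_le_one_right' (neg_mul_le_one a)

theorem neg_rdiv_eq_neg_mul (a b : α) : ∼b ⟋ a = ∼(a * b) :=
  eq_of_forall_le_iff fun x ↦ by
    rw [le_rdiv_iff, le_neg_iff_mul_le_one', le_neg_iff_mul_le_one', mul_assoc]

theorem le_one_of_mul_mul_neg_le_one {a b : α} (h : a * (b * ∼b) ≤ 1) : a ≤ 1 := by
  have h_neg : ∼b * a ≤ ∼b := by
    rw [le_neg_iff_mul_le_one, ← mul_assoc]
    exact mul_le_one_comm.1 h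
  exact le_one_of_mul_le_self h_neg

theorem rdiv_self (a : α) : a ⟋ a = 1 := by
  refine le_antisymm ?_ ((le_rdiv_iff _ _ _).2 (one_mul a).le)
  apply le_one_of_mul_mul_neg_le_one (b := a)
  calc (a ⟋ a) * (a * ∼a) = (a ⟋ a) * a * ∼a := (mul_assoc _ _ _).symm
    _ ≤ a * ∼a := mul_le_mul_left (rdiv_mul_le a a) _
    _ ≤ 1 := mul_neg_le_one a

theorem le_one_of_neg_mul_mul_le_one {a b : α} (h : ∼b * b * a ≤ 1) : a ≤ 1 := by
  have h_neg : a * ∼b ≤ ∼b := by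
    rw [le_neg_iff_mul_le_one', mul_assoc]
    exact mul_le_one_comm.1 h
  rwa [← le_rdiv_iff, rdiv_self] at h_neg

theorem galoisConnection_neg :
    GaloisConnection (fun a : α ↦ OrderDual.toDual ∼a) (fun a ↦ ∼(OrderDual.ofDual a)) :=
  fun _ _ ↦ le_neg_iff_mul_le_one.trans le_neg_iff_mul_le_one'.symm

theorem neg_neg_neg (a : α) : ∼∼∼a = ∼a :=
  galoisConnection_neg.u_l_u_eq_u (OrderDual.toDual a)

theorem neg_mul_neg_neg (a b : α) : ∼(a * ∼∼b) = ∼(a * b) := by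
  rw [← neg_rdiv_eq_neg_mul, neg_neg_neg, neg_rdiv_eq_neg_mul]

theorem neg_neg_neg_mul (a b : α) : ∼(∼∼a * b) = ∼(a * b) := by
  rw [← ldiv_neg_eq_neg_mul, neg_neg_neg, ldiv_neg_eq_neg_mul]

theorem neg_ldiv_eq_neg_neg_mul (a b : α) : ∼(a ⟍ b) = ∼(∼a * b) := by
  refine eq_of_forall_le_iff fun x ↦ ?_
  rw [le_neg_iff_mul_le_one, le_neg_iff_mul_le_one]
  refine ⟨(mul_le_mul_left (neg_mul_le_ldiv a b) x).trans, fun h ↦ ?_⟩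
  apply le_one_of_neg_mul_mul_le_one (b := a)
  calc ∼a * a * ((a ⟍ b) * x) = ∼a * (a * (a ⟍ b)) * x := by simp only [mul_assoc]
    _ ≤ ∼a * b * x := by gcongr; exact mul_ldiv_le a b
    _ ≤ 1 := h

theorem neg_rdiv_eq_neg_mul_neg (b a : α) : ∼(b ⟋ a) = ∼(b * ∼a) := by
  refine eq_of_forall_le_iff fun x ↦ ?_
  rw [le_neg_iff_mul_le_one', le_neg_iff_mul_le_one']
  refine ⟨(mul_le_mul_right (mul_neg_le_rdiv b a) x).trans, fun h ↦ ?_⟩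
  apply le_one_of_mul_mul_neg_le_one (b := a)
  calc x * (b ⟋ a) * (a * ∼a) = x * ((b ⟋ a) * a * ∼a) := by simp only [mul_assoc]
    _ ≤ x * (b * ∼a) := by gcongr; exact rdiv_mul_le b a
    _ ≤ 1 := h

theorem neg_neg_ldiv (a b : α) : ∼∼(a ⟍ b) = ∼∼a ⟍ ∼∼b :=
  calc ∼∼(a ⟍ b) = ∼∼(∼a * b) := by rw [neg_ldiv_eq_neg_neg_mul]
    _ = ∼∼(∼∼∼a * ∼∼b) := by rw [neg_mul_neg_neg, neg_neg_neg_mul]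
    _ = ∼∼(∼∼a ⟍ ∼∼b) := by rw [neg_ldiv_eq_neg_neg_mul]
    _ = ∼∼a ⟍ ∼∼b := by rw [ldiv_neg_eq_neg_mul, neg_neg_neg]

theorem neg_neg_rdiv (b a : α) : ∼∼(b ⟋ a) = ∼∼b ⟋ ∼∼a :=
  calc ∼∼(b ⟋ a) = ∼∼(b * ∼a) := by rw [neg_rdiv_eq_neg_mul_neg]
    _ = ∼∼(∼∼b * ∼∼∼a) := by rw [neg_mul_neg_neg, neg_neg_neg_mul]
    _ = ∼∼(∼∼b ⟋ ∼∼a) := by rw [neg_rdiv_eq_neg_mul_neg]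
    _ = ∼∼b ⟋ ∼∼a := by rw [neg_rdiv_eq_neg_mul, neg_neg_neg]

end IntegrallyClosed

end ResiduatedPomonoid

open scoped ResiduatedPomonoid in
theorem notnot_residuals_general {α : Type*} [ResiduatedPomonoid α]
    [ResiduatedPomonoid.IntegrallyClosed α] (a b : α) :
    ∼∼(a ⟍ b) = ∼∼a ⟍ ∼∼b ∧ ∼∼(b ⟋ a) = ∼∼b ⟋ ∼∼a :=
  ⟨ResiduatedPomonoid.neg_neg_ldiv a b, ResiduatedPomonoid.neg_neg_rdiv b a⟩

/-- In any integrally closed residuated lattice, the nucleus `α(a) = ~~a`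
preserves the residuals, where `~a := a\e = e/a`. -/
theorem notnot_residuals {α : Type*} [ResiduatedLattice α]
    (hic : ∀ a : α, ldiv a a = 1 ∧ rdiv a a = 1) :
    ∀ a b : α,
      ldiv (ldiv (ldiv a b) 1) 1 = ldiv (ldiv (ldiv a 1) 1) (ldiv (ldiv b 1) 1) ∧
      ldiv (ldiv (rdiv b a) 1) 1 = rdiv (ldiv (ldiv b 1) 1) (ldiv (ldiv a 1) 1) := by
  let _ := ResiduatedLattice.toResiduatedPomonoid (α := α)
  have : ResiduatedPomonoid.IntegrallyClosed α := ⟨fun a ↦ (hic a).1⟩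
  exact notnot_residuals_general
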